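/- Let r ≥ 5. Realize so_{2r}(ℂ) = {X ∈ gl_{2r}(ℂ) : Xᵀ·J + J·X = 0} with J = [[0, I_r],[I_r, 0]], let SO_J(ℂ) = {g : gᵀ·J·g = J, det g = 1} and O_J(ℂ) = {g : gᵀ·J·g = J}, let h₀ = [[I_r, 0],[0, −I_r]] ∈ so_{2r}(ℂ), and for X ∈ so_{2r}(ℂ) put q(X) = Σ_{i=2}^{r} X_{i,1}·X_{r+i,1}. Then {X ∈ so_{2r}(ℂ) : q(g·X·g⁻¹) = 0 for all g ∈ SO_J(ℂ)} = {t·u·h₀·u⁻¹ : t ∈ ℂ∖{0}, u ∈ O_J(ℂ)} ∪ {X ∈ so_{2r}(ℂ) : X² = 0} = {X ∈ so_{2r}(ℂ) : X² is a scalar multiple of I_{2r}}, and this set equals the Zariski closure of the cone {t·u·h₀·u⁻¹ : t ∈ ℂ∖{0}, u ∈ O_J(ℂ)}. -/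

import Mathlib

open Matrix

noncomputable section

abbrev MatB (r : ℕ) := Matrix (Fin r ⊕ Fin r) (Fin r ⊕ Fin r) ℂ

abbrev GLB (r : ℕ) := Matrix.GeneralLinearGroup (Fin r ⊕ Fin r) ℂ

/-- A subset of the space of square complex matrices is Zariski closed if it is the
common zero locus of a family of polynomials in the matrix entries. -/
def zclosed {ι : Type} (S : Set (Matrix ι ι ℂ)) : Prop :=
  ∃ T : Set (MvPolynomial (ι × ι) ℂ),
    S = {X | ∀ p ∈ T, MvPolynomial.eval (fun q => X q.1 q.2) p = 0}

/-- The Zariski closure of a set of matrices. -/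
def zclosure {ι : Type} (S : Set (Matrix ι ι ℂ)) : Set (Matrix ι ι ℂ) :=
  ⋂₀ {C | zclosed C ∧ S ⊆ C}

/-!
If `X` is skew with respect to the split form and `X² = t²`, then the image of `X + t` is isotropic,
and every maximal isotropic subspace `M` containing it satisfies `M ⊆ M^⊥ ⊆ ker (X - t)`. Extending
a basis of the Lagrangian `M` to an isometry `u` gives `X = u * [[t, b], [0, -t]] * u⁻¹` with `b`
skew. If `t ≠ 0`, a unipotent isometry conjugates the block matrix to `t h₀`; if `t = 0`, then `X`
is the value at `s = 0` of the line `u * [[s, b], [0, -s]] * u⁻¹`, which lies in the cone for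
`s ≠ 0`.

For the singular vector, `2 q(g X g⁻¹) = -⟨v, X² v⟩` with `v = g⁻¹ e₁`. The special orthogonal group
is transitive on nonzero isotropic vectors, so `q` vanishes on the orbit of `X` exactly when the
symmetric form `J X²` vanishes on the quadric `J = 0`, that is, when it is a multiple of `J`.
-/

section Isotropic

open Module
open LinearMap (BilinForm range)

variable {K V : Type*} [Field K] [AddCommGroup V] [Module K V]

lemma exists_ne_zero_apply_self_eq_zero [IsAlgClosed K] (B : LinearMap.BilinForm K V)
    (hV : 1 < finrank K V) : ∃ z ≠ 0, B z z = 0 := by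
  have : Nontrivial V := nontrivial_of_finrank_pos (zero_lt_one.trans hV)
  obtain ⟨y, hy⟩ := exists_ne (0 : V)
  obtain ⟨x, hyx⟩ := exists_linearIndependent_pair_of_one_lt_finrank hV hy
  by_cases hByy : B y y = 0
  · exact ⟨y, hy, hByy⟩
  obtain ⟨s, hs⟩ := IsAlgClosed.exists_root
    (.C (B y y) * .X ^ 2 + .C (B x y + B y x) * .X + .C (B x x) : Polynomial K)
    (by simp only [Polynomial.degree_quadratic hByy, ne_eq, OfNat.ofNat_ne_zero, not_false_eq_true])
  refine ⟨x + s • y, fun h => ?_, ?_⟩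
  · exact one_ne_zero (LinearIndependent.pair_iff.mp hyx s 1 (by rw [one_smul, add_comm, h])).2
  · simp only [Polynomial.IsRoot, Polynomial.eval_add, Polynomial.eval_mul, Polynomial.eval_C,
      Polynomial.eval_pow, Polynomial.eval_X] at hs
    simp only [map_add, map_smul, LinearMap.add_apply, LinearMap.smul_apply, smul_eq_mul]
    linear_combination hs

lemma isotropic_sup_span_singleton {B : LinearMap.BilinForm K V} (hB : B.IsRefl) {L : Submodule K V}
    (hL : L ≤ B.orthogonal L) {z : V} (hzL : z ∈ B.orthogonal L) (hz : B z z = 0) :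
    L ⊔ K ∙ z ≤ B.orthogonal (L ⊔ K ∙ z) := by
  have comm {M N : Submodule K V} (h : M ≤ B.orthogonal N) : N ≤ B.orthogonal M :=
    fun x hx y hy => hB _ _ (h hy x hx)
  have hzL' : K ∙ z ≤ B.orthogonal L := (Submodule.span_singleton_le_iff_mem ..).mpr hzL
  have hz' : K ∙ z ≤ B.orthogonal (K ∙ z) := by
    rw [Submodule.span_singleton_le_iff_mem, BilinForm.mem_orthogonal_iff]
    intro w hw
    obtain ⟨c, rfl⟩ := Submodule.mem_span_singleton.mp hw
    rw [map_smul, LinearMap.smul_apply, hz, smul_zero]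
  exact sup_le (comm (sup_le hL hzL')) (comm (sup_le (comm hzL') hz'))

lemma exists_linearIndependent_mem_apply_eq [FiniteDimensional K V] {ι : Type*} [Fintype ι]
    {M : Submodule K V} (hM : Fintype.card ι ≤ finrank K M) {v : V} (hv : v ≠ 0) (hvM : v ∈ M)
    (i₀ : ι) :
    ∃ a : ι → V, LinearIndependent K a ∧ (∀ i, a i ∈ M) ∧ a i₀ = v := by
  classical
  have hv' : LinearIndepOn K id {(⟨v, hvM⟩ : M)} := .singleton (by simpa using hv)
  let b := Module.Basis.extend hv'
  have := Module.Finite.finite_basis b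
  have := Fintype.ofFinite (hv'.extend (Set.subset_univ _))
  rw [Module.finrank_eq_card_basis b] at hM
  obtain ⟨e⟩ := Function.Embedding.nonempty_of_card_le hM
  let e' := e.setValue i₀ ⟨⟨v, hvM⟩, Module.Basis.subset_extend hv' rfl⟩
  refine ⟨fun i => b (e' i), ?_, fun i => (b (e' i)).2, ?_⟩
  · exact (b.linearIndependent.comp e' e'.injective).map' M.subtype M.ker_subtype
  · simp [b, e']

variable [IsAlgClosed K] [FiniteDimensional K V] {B : LinearMap.BilinForm K V}

lemma exists_isotropic_gt (hB : B.Nondegenerate) (hr : B.IsRefl) {L : Submodule K V}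
    (hL : L ≤ B.orthogonal L) (hlt : 2 * finrank K L + 1 < finrank K V) :
    ∃ M, L < M ∧ M ≤ B.orthogonal M := by
  obtain ⟨W, hW⟩ := Submodule.exists_isCompl L
  have hdim : 1 < finrank K ↥(W ⊓ B.orthogonal L) := by
    have h₁ := Submodule.finrank_add_eq_of_isCompl hW
    have h₂ := BilinForm.finrank_orthogonal hB L
    have h₃ := Submodule.finrank_sup_add_finrank_inf_eq W (B.orthogonal L)
    have h₄ := Submodule.finrank_le (W ⊔ B.orthogonal L)
    omega
  obtain ⟨⟨z, hzW, hzL⟩, hz, hBz⟩ :=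
    exists_ne_zero_apply_self_eq_zero (B.restrict (W ⊓ B.orthogonal L)) hdim
  have hzL' : z ∉ L := fun h => hz (Subtype.ext (Submodule.disjoint_def.mp hW.disjoint z h hzW))
  refine ⟨L ⊔ K ∙ z, left_lt_sup.mpr ?_, isotropic_sup_span_singleton hr hL hzL hBz⟩
  rwa [Submodule.span_singleton_le_iff_mem]

lemma exists_isotropic_ge_finrank_le (hB : B.Nondegenerate) (hr : B.IsRefl) {L : Submodule K V}
    (hL : L ≤ B.orthogonal L) :
    ∃ M, L ≤ M ∧ M ≤ B.orthogonal M ∧ finrank K V ≤ 2 * finrank K M + 1 := by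
  obtain ⟨M, ⟨hLM, hM⟩, hmax⟩ := exists_maximal_of_wellFoundedGT
    (fun M : Submodule K V => L ≤ M ∧ M ≤ B.orthogonal M) ⟨L, le_rfl, hL⟩
  refine ⟨M, hLM, hM, not_lt.mp fun hlt => ?_⟩
  obtain ⟨N, hMN, hN⟩ := exists_isotropic_gt hB hr hM hlt
  exact hMN.not_ge (hmax ⟨hLM.trans hMN.le, hN⟩ hMN.le)

lemma exists_isotropic_le_eigenspace (hB : B.Nondegenerate) (hr : B.IsRefl) {f : End K V}
    (hf : B.IsSkewAdjoint f) {t : K} (hft : f * f = (t * t) • 1) :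
    ∃ M, M ≤ B.orthogonal M ∧ M ≤ f.eigenspace t ∧ finrank K V ≤ 2 * finrank K M + 1 := by
  have hadj (x y : V) : B ((f + t • 1) x) y = -B x ((f - t • 1) y) := by
    have hfxy : B (f x) y = -B x (f y) := (hf x y).trans (map_neg _ _)
    simp only [LinearMap.add_apply, LinearMap.sub_apply, LinearMap.smul_apply,
      Module.End.one_apply, map_add, map_sub, map_smul, hfxy]
    module
  have hann : (f - t • 1) * (f + t • 1) = 0 := by
    simp only [sub_mul, mul_add, hft, smul_mul_assoc, mul_smul_comm, one_mul, mul_one]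
    module
  have hrange : range (f + t • 1) ≤ B.orthogonal (range (f + t • 1)) := by
    rintro _ ⟨y, rfl⟩ _ ⟨x, rfl⟩
    rw [hadj, ← Module.End.mul_apply, hann, LinearMap.zero_apply, map_zero, neg_zero]
  obtain ⟨M, hfM, hM, hdim⟩ := exists_isotropic_ge_finrank_le hB hr hrange
  refine ⟨M, hM, fun x hx => Module.End.mem_eigenspace_iff.mpr (sub_eq_zero.mp ?_), hdim⟩
  refine hB.2 _ fun y => ?_
  have hyx : B ((f + t • 1) y) x = 0 := hM hx _ (hfM ⟨y, rfl⟩)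
  rwa [hadj, neg_eq_zero] at hyx

end Isotropic

section IsometryGroup

variable {m R : Type*} [Fintype m] [DecidableEq m] [CommRing R] {J X : Matrix m m R} {g : GL m R}

lemma mem_skewAdjointMatricesLieSubalgebra_iff_add_eq_zero :
    X ∈ skewAdjointMatricesLieSubalgebra J ↔ Xᵀ * J + J * X = 0 := by
  rw [mem_skewAdjointMatricesLieSubalgebra, mem_skewAdjointMatricesSubmodule,
    Matrix.IsSkewAdjoint, IsAdjointPair, mul_neg, eq_neg_iff_add_eq_zero]

/-- The group `O_J` of invertible matrices preserving the bilinear form with Gram matrix `J`. -/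
def isometryGroup (J : Matrix m m R) : Subgroup (GL m R) where
  carrier := {g | (g : Matrix m m R)ᵀ * J * (g : Matrix m m R) = J}
  one_mem' := by simp
  mul_mem' {a b} ha hb := by
    simp only [Set.mem_ofPred_eq, Units.val_mul, transpose_mul] at ha hb ⊢
    calc _ = (b : Matrix m m R)ᵀ * ((a : Matrix m m R)ᵀ * J * a) * b := by
            simp only [Matrix.mul_assoc]
      _ = J := by rw [ha, hb]
  inv_mem' {a} ha := by
    simp only [Set.mem_ofPred_eq] at ha ⊢
    have ha' : ((a⁻¹ : GL m R) : Matrix m m R)ᵀ * (a : Matrix m m R)ᵀ = 1 := by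
      rw [← transpose_mul, Units.mul_inv, transpose_one]
    calc _ = ((a⁻¹ : GL m R) : Matrix m m R)ᵀ * ((a : Matrix m m R)ᵀ * J * a) * a⁻¹ := by rw [ha]
      _ = (((a⁻¹ : GL m R) : Matrix m m R)ᵀ * (a : Matrix m m R)ᵀ) * J * (a * a⁻¹) := by
            simp only [Matrix.mul_assoc]
      _ = J := by rw [ha', Units.mul_inv, one_mul, mul_one]

lemma mem_isometryGroup_iff :
    g ∈ isometryGroup J ↔ (g : Matrix m m R)ᵀ * J * (g : Matrix m m R) = J := .rfl

lemma transpose_mul_of_mem_isometryGroup (hg : g ∈ isometryGroup J) :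
    (g : Matrix m m R)ᵀ * J = J * (g⁻¹ : GL m R) :=
  g.eq_mul_inv_iff_mul_eq.mpr hg

lemma mulVec_dotProduct_mulVec_mulVec (hg : g ∈ isometryGroup J) (x y : m → R) :
    ((g : Matrix m m R) *ᵥ x) ⬝ᵥ (J *ᵥ ((g : Matrix m m R) *ᵥ y)) = x ⬝ᵥ (J *ᵥ y) := by
  rw [← vecMul_transpose, ← dotProduct_mulVec, mulVec_mulVec, mulVec_mulVec,
    mem_isometryGroup_iff.mp hg]

lemma conj_mem_skewAdjointMatricesLieSubalgebra (hg : g ∈ isometryGroup J)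
    (hX : X ∈ skewAdjointMatricesLieSubalgebra J) :
    (g : Matrix m m R) * X * (g⁻¹ : GL m R) ∈ skewAdjointMatricesLieSubalgebra J := by
  rw [mem_skewAdjointMatricesLieSubalgebra_iff_add_eq_zero] at hX ⊢
  have hg' := transpose_mul_of_mem_isometryGroup hg
  have hg'' := transpose_mul_of_mem_isometryGroup (inv_mem hg)
  rw [inv_inv] at hg''
  calc _ = ((g⁻¹ : GL m R) : Matrix m m R)ᵀ * Xᵀ * ((g : Matrix m m R)ᵀ * J)
        + (J * g) * X * (g⁻¹ : GL m R) := by simp only [transpose_mul, Matrix.mul_assoc]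
    _ = ((g⁻¹ : GL m R) : Matrix m m R)ᵀ * (Xᵀ * J + J * X) * (g⁻¹ : GL m R) := by
        rw [hg', ← hg'']
        noncomm_ring
    _ = 0 := by rw [hX, mul_zero, zero_mul]

lemma conj_mul_conj (g : GL m R) (X Y : Matrix m m R) :
    ((g : Matrix m m R) * X * (g⁻¹ : GL m R)) * ((g : Matrix m m R) * Y * (g⁻¹ : GL m R)) =
      (g : Matrix m m R) * (X * Y) * (g⁻¹ : GL m R) := by
  simp only [Matrix.mul_assoc, Units.inv_mul_cancel_left]

section Field

variable {K : Type*} [Field K] {J : Matrix m m K}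

lemma exists_mem_isometryGroup_coe_eq (hJ : J.det ≠ 0) {A : Matrix m m K} (hA : Aᵀ * J * A = J) :
    ∃ g ∈ isometryGroup J, (g : Matrix m m K) = A := by
  have hdet : A.det ≠ 0 := fun h => hJ (by rw [← hA, det_mul, h, mul_zero])
  exact ⟨GeneralLinearGroup.mkOfDetNeZero A hdet, hA, rfl⟩

lemma det_eq_one_or_neg_one_of_mem_isometryGroup (hJ : J.det ≠ 0) {g : GL m K}
    (hg : g ∈ isometryGroup J) : (g : Matrix m m K).det = 1 ∨ (g : Matrix m m K).det = -1 := by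
  have hdet := congrArg det (mem_isometryGroup_iff.mp hg)
  rw [det_mul, det_mul, det_transpose] at hdet
  exact mul_self_eq_one_iff.mp (mul_right_cancel₀ hJ (by linear_combination hdet))

end Field

end IsometryGroup

section ZariskiClosure

variable {ι K : Type*} [Field K]

/-- The Zariski closure of a set of matrices, seen as points of the affine space with coordinates
indexed by `ι × ι`. It extends `zclosure` to arbitrary fields. -/
def zariskiClosure (S : Set (Matrix ι ι K)) : Set (Matrix ι ι K) :=
  {X | (fun q => X q.1 q.2) ∈ MvPolynomial.zeroLocus K
    (MvPolynomial.vanishingIdeal K ((fun (Y : Matrix ι ι K) (q : ι × ι) => Y q.1 q.2) '' S))}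

lemma mem_zariskiClosure_iff {S : Set (Matrix ι ι K)} {X : Matrix ι ι K} :
    X ∈ zariskiClosure S ↔ ∀ p : MvPolynomial (ι × ι) K,
      (∀ Y ∈ S, MvPolynomial.eval (fun q => Y q.1 q.2) p = 0) →
        MvPolynomial.eval (fun q => X q.1 q.2) p = 0 := by
  simp only [zariskiClosure, Set.mem_ofPred_eq, MvPolynomial.mem_zeroLocus_iff,
    MvPolynomial.mem_vanishingIdeal_iff, Set.forall_mem_image, MvPolynomial.aeval_eq_eval]

lemma zclosure_eq_zariskiClosure {ι : Type} (S : Set (Matrix ι ι ℂ)) :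
    zclosure S = zariskiClosure S := by
  ext X
  rw [mem_zariskiClosure_iff]
  constructor
  · intro hX p hp
    have hclosed : zclosed {Y : Matrix ι ι ℂ | MvPolynomial.eval (fun q => Y q.1 q.2) p = 0} :=
      ⟨{p}, by simp only [Set.mem_singleton_iff, forall_eq]⟩
    exact hX _ ⟨hclosed, hp⟩
  · rintro hX _ ⟨⟨T, rfl⟩, hST⟩ p hp
    exact hX p fun Y hY => hST hY p hp

lemma subset_zariskiClosure (S : Set (Matrix ι ι K)) : S ⊆ zariskiClosure S :=
  fun _ hX => mem_zariskiClosure_iff.mpr fun _ hp => hp _ hX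

lemma mem_zariskiClosure_of_forall_add_smul_mem [Infinite K] {S : Set (Matrix ι ι K)}
    {X Y : Matrix ι ι K} (h : ∀ t : K, t ≠ 0 → X + t • Y ∈ S) : X ∈ zariskiClosure S := by
  refine mem_zariskiClosure_iff.mpr fun p hp => ?_
  let P : Polynomial K := MvPolynomial.aeval
    (fun q : ι × ι => Polynomial.C (X q.1 q.2) + Polynomial.X * Polynomial.C (Y q.1 q.2)) p
  have hP (t : K) : P.eval t = MvPolynomial.eval (fun q => (X + t • Y) q.1 q.2) p := by
    simp only [P]
    rw [← Polynomial.coe_aeval_eq_eval, MvPolynomial.comp_aeval_apply, MvPolynomial.aeval_eq_eval]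
    simp [mul_comm t]
  have hP0 : P = 0 := by
    refine Polynomial.eq_zero_of_infinite_isRoot P
      ((Set.finite_singleton (0 : K)).infinite_compl.mono fun t ht => ?_)
    exact (hP t).trans (hp _ (h t ht))
  simpa [hP0] using (hP 0).symm

variable [Fintype ι] [DecidableEq ι]

lemma mapMatrix_eval_eq_zero_of_mem_zariskiClosure {S : Set (Matrix ι ι K)}
    {P : Matrix ι ι (MvPolynomial (ι × ι) K)}
    (hP : ∀ Y ∈ S, (MvPolynomial.eval fun q => Y q.1 q.2).mapMatrix P = 0) {X : Matrix ι ι K}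
    (hX : X ∈ zariskiClosure S) : (MvPolynomial.eval fun q => X q.1 q.2).mapMatrix P = 0 :=
  ext fun i j => mem_zariskiClosure_iff.mp hX (P i j) fun Y hY => congrFun₂ (hP Y hY) i j

lemma mapMatrix_eval_mapMatrix_C (x : ι × ι → K) (A : Matrix ι ι K) :
    (MvPolynomial.eval x).mapMatrix (MvPolynomial.C.mapMatrix A) = A := by
  ext
  simp

lemma zariskiClosure_subset_skewAdjointMatricesLieSubalgebra {S : Set (Matrix ι ι K)}
    {J : Matrix ι ι K} (hS : S ⊆ skewAdjointMatricesLieSubalgebra J) :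
    zariskiClosure S ⊆ skewAdjointMatricesLieSubalgebra J := by
  let G := mvPolynomialX ι ι K
  let J' : Matrix ι ι (MvPolynomial (ι × ι) K) := MvPolynomial.C.mapMatrix J
  have heval (Y : Matrix ι ι K) :
      (MvPolynomial.eval fun q => Y q.1 q.2).mapMatrix (Gᵀ * J' + J' * G) = Yᵀ * J + J * Y := by
    have hGT := congrArg transpose (mvPolynomialX_mapMatrix_eval Y)
    rw [map_add, map_mul, map_mul, mapMatrix_eval_mapMatrix_C, mvPolynomialX_mapMatrix_eval, ← hGT]
    rfl
  intro X hX
  rw [SetLike.mem_coe, mem_skewAdjointMatricesLieSubalgebra_iff_add_eq_zero, ← heval]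
  refine mapMatrix_eval_eq_zero_of_mem_zariskiClosure (fun Y hY => ?_) hX
  rw [heval, mem_skewAdjointMatricesLieSubalgebra_iff_add_eq_zero.mp (hS hY)]

lemma exists_eq_smul_one_iff_commute_single {M : Matrix ι ι K} :
    (∃ c : K, M = c • 1) ↔ ∀ i j, Commute (single i j 1) M := by
  rw [← mem_range_scalar_iff_commute_single']
  simp only [Set.mem_range, scalar_apply, smul_one_eq_diagonal, eq_comm]

lemma exists_mul_self_eq_smul_one_of_mem_zariskiClosure {S : Set (Matrix ι ι K)}
    (hS : ∀ Y ∈ S, ∃ c : K, Y * Y = c • 1) {X : Matrix ι ι K} (hX : X ∈ zariskiClosure S) :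
    ∃ c : K, X * X = c • 1 := by
  let G := mvPolynomialX ι ι K
  let E (i j : ι) : Matrix ι ι (MvPolynomial (ι × ι) K) := MvPolynomial.C.mapMatrix (single i j 1)
  have heval (i j : ι) (Y : Matrix ι ι K) :
      (MvPolynomial.eval fun q => Y q.1 q.2).mapMatrix (E i j * (G * G) - G * G * E i j) =
        single i j 1 * (Y * Y) - Y * Y * single i j 1 := by
    simp only [map_sub, map_mul, E, G, mapMatrix_eval_mapMatrix_C, mvPolynomialX_mapMatrix_eval]
  refine exists_eq_smul_one_iff_commute_single.mpr fun i j => sub_eq_zero.mp ?_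
  rw [← heval]
  refine mapMatrix_eval_eq_zero_of_mem_zariskiClosure (fun Y hY => ?_) hX
  rw [heval, sub_eq_zero]
  exact exists_eq_smul_one_iff_commute_single.mp (hS Y hY) i j

end ZariskiClosure
section SplitForm

open LieAlgebra.Orthogonal (JD typeD)

variable {n K : Type*} [DecidableEq n] [Field K]

lemma JD_transpose : (JD n K)ᵀ = JD n K := by
  simp [JD, fromBlocks_transpose]

variable [Fintype n]

lemma JD_mul_self : JD n K * JD n K = 1 := by
  simp [JD, fromBlocks_multiply]

lemma JD_det_ne_zero : (JD n K).det ≠ 0 :=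
  det_ne_zero_of_left_inverse JD_mul_self

lemma JD_mulVec_apply (v : n ⊕ n → K) (k : n ⊕ n) : (JD n K *ᵥ v) k = v k.swap := by
  cases k <;> simp [JD, fromBlocks_mulVec]

lemma dotProduct_JD_mulVec_comm (x y : n ⊕ n → K) : x ⬝ᵥ JD n K *ᵥ y = y ⬝ᵥ JD n K *ᵥ x := by
  rw [dotProduct_mulVec, ← mulVec_transpose, JD_transpose, dotProduct_comm]

variable (n K) in
lemma isRefl_toBilin'_JD : (toBilin' (JD n K)).IsRefl := fun x y h => by
  rwa [toBilin'_apply', dotProduct_JD_mulVec_comm, ← toBilin'_apply']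

variable (n K) in
lemma nondegenerate_toBilin'_JD : (toBilin' (JD n K)).Nondegenerate :=
  LinearMap.BilinForm.nondegenerate_toBilin'_of_det_ne_zero' _ JD_det_ne_zero

lemma fromBlocks_mem_typeD_iff {a b c d : Matrix n n K} :
    fromBlocks a b c d ∈ typeD n K ↔ cᵀ = -c ∧ d = -aᵀ ∧ bᵀ = -b := by
  rw [typeD, mem_skewAdjointMatricesLieSubalgebra_iff_add_eq_zero]
  simp only [JD, fromBlocks_transpose, fromBlocks_multiply, fromBlocks_add, mul_zero, mul_one,
    zero_mul, one_mul, zero_add, add_zero, ← fromBlocks_zero, fromBlocks_inj]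
  constructor
  · rintro ⟨hc, hd, -, hb⟩
    exact ⟨eq_neg_of_add_eq_zero_left hc, eq_neg_of_add_eq_zero_right hd,
      eq_neg_of_add_eq_zero_left hb⟩
  · rintro ⟨hc, rfl, hb⟩
    simp [hc, hb]

lemma exists_eq_fromBlocks_of_mulVec_single_inl {Z : Matrix (n ⊕ n) (n ⊕ n) K}
    (hZ : Z ∈ typeD n K) {t : K}
    (hZt : ∀ i : n, Z *ᵥ Pi.single (.inl i) 1 = t • Pi.single (.inl i) 1) :
    ∃ b : Matrix n n K, bᵀ = -b ∧ Z = fromBlocks (t • 1) b 0 (-(t • 1)) := by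
  have hcol (k : n ⊕ n) (i : n) : Z k (.inl i) = t * (Pi.single (.inl i) 1 : n ⊕ n → K) k := by
    simpa using congrFun (hZt i) k
  have h₁₁ : Z.toBlocks₁₁ = t • 1 := by
    ext k i
    simp [toBlocks₁₁, hcol, Pi.single_apply, one_apply]
  have h₂₁ : Z.toBlocks₂₁ = 0 := by
    ext k i
    simp [toBlocks₂₁, hcol]
  rw [← fromBlocks_toBlocks Z, h₁₁, h₂₁, fromBlocks_mem_typeD_iff, transpose_smul,
    transpose_one] at hZ
  exact ⟨Z.toBlocks₁₂, hZ.2.2, by rw [← h₁₁, ← h₂₁, h₁₁, ← hZ.2.1, ← h₁₁, fromBlocks_toBlocks]⟩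

lemma isSkewAdjoint_toLin'_of_mem_typeD {X : Matrix (n ⊕ n) (n ⊕ n) K} (hX : X ∈ typeD n K) :
    (toBilin' (JD n K)).IsSkewAdjoint (toLin' X) := fun x y => by
  have hX' : Xᵀ * JD n K = -(JD n K * X) :=
    eq_neg_of_add_eq_zero_left (mem_skewAdjointMatricesLieSubalgebra_iff_add_eq_zero.mp hX)
  rw [toBilin'_apply', toLin'_apply, ← vecMul_transpose, ← dotProduct_mulVec, mulVec_mulVec, hX',
    Pi.neg_apply, map_neg, toBilin'_apply', toLin'_apply, mulVec_mulVec, neg_mulVec, dotProduct_neg]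

variable [NeZero (2 : K)]

/- The columns of `J Bᵀ` are dual to those of `A`; subtracting `½ A (B J Bᵀ)` makes them
isotropic. -/
lemma exists_fromCols_isometry {A : Matrix (n ⊕ n) n K} {B : Matrix n (n ⊕ n) K}
    (hA : Aᵀ * JD n K * A = 0) (hBA : B * A = 1) :
    ∃ D, (fromCols A D)ᵀ * JD n K * fromCols A D = JD n K := by
  let S := B * JD n K * Bᵀ
  have hS : Sᵀ = S := by
    simp only [S, transpose_mul, transpose_transpose, JD_transpose, Matrix.mul_assoc]
  have hAB : Aᵀ * Bᵀ = 1 := by rw [← transpose_mul, hBA, transpose_one]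
  let D := JD n K * Bᵀ - (2 : K)⁻¹ • (A * S)
  have hJD : JD n K * D = Bᵀ - (2 : K)⁻¹ • (JD n K * A * S) := by
    simp only [D, Matrix.mul_sub, Matrix.mul_smul, ← Matrix.mul_assoc, JD_mul_self, Matrix.one_mul]
  have hDT : Dᵀ = B * JD n K - (2 : K)⁻¹ • (S * Aᵀ) := by
    simp only [D, transpose_sub, transpose_smul, transpose_mul, transpose_transpose, JD_transpose,
      hS]
  have hAJD : Aᵀ * JD n K * D = 1 := by
    rw [Matrix.mul_assoc, hJD, Matrix.mul_sub, Matrix.mul_smul, ← Matrix.mul_assoc Aᵀ,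
      ← Matrix.mul_assoc Aᵀ, hA, Matrix.zero_mul, smul_zero, sub_zero, hAB]
  have hDJA : Dᵀ * JD n K * A = 1 := by
    rw [← transpose_inj, transpose_one, ← hAJD]
    simp only [transpose_mul, transpose_transpose, JD_transpose, Matrix.mul_assoc]
  have hDJD : Dᵀ * JD n K * D = 0 := by
    calc Dᵀ * JD n K * D = Dᵀ * (Bᵀ - (2 : K)⁻¹ • (JD n K * A * S)) := by
          rw [Matrix.mul_assoc, hJD]
      _ = Dᵀ * Bᵀ - (2 : K)⁻¹ • (Dᵀ * JD n K * A * S) := by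
          rw [Matrix.mul_sub, Matrix.mul_smul]; simp only [Matrix.mul_assoc]
      _ = S - (2 : K)⁻¹ • S - (2 : K)⁻¹ • S := by
          rw [hDJA, Matrix.one_mul, hDT, Matrix.sub_mul, Matrix.smul_mul, Matrix.mul_assoc S, hAB,
            Matrix.mul_one]
      _ = 0 := by
          have : (2 : K)⁻¹ + 2⁻¹ = 1 := by field_simp; norm_num
          rw [sub_sub, ← add_smul, this, one_smul, sub_self]
  refine ⟨D, ?_⟩
  rw [transpose_fromCols, fromRows_mul, fromRows_mul_fromCols, hA, hAJD, hDJA, hDJD, JD]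

lemma exists_isometryGroup_mulVec_single {a : n → n ⊕ n → K} (ha : LinearIndependent K a)
    (hiso : ∀ i j, a i ⬝ᵥ JD n K *ᵥ a j = 0) :
    ∃ u ∈ isometryGroup (JD n K),
      ∀ i, (u : Matrix (n ⊕ n) (n ⊕ n) K) *ᵥ Pi.single (.inl i) 1 = a i := by
  let A : Matrix (n ⊕ n) n K := (of a)ᵀ
  have hker : (toLin' A).ker = ⊥ :=
    LinearMap.ker_eq_bot.mpr (mulVec_injective_iff.mpr ha)
  obtain ⟨f, hf⟩ := (toLin' A).exists_leftInverse_of_injective hker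
  have hBA : LinearMap.toMatrix' f * A = 1 := by
    rw [← LinearMap.toMatrix'_toLin' A, ← LinearMap.toMatrix'_comp, hf, LinearMap.toMatrix'_id]
  have hA : Aᵀ * JD n K * A = 0 := by
    ext i j
    rw [Matrix.mul_assoc]
    exact hiso i j
  obtain ⟨D, hD⟩ := exists_fromCols_isometry hA hBA
  obtain ⟨u, hu, huD⟩ := exists_mem_isometryGroup_coe_eq JD_det_ne_zero hD
  refine ⟨u, hu, fun i => ?_⟩
  rw [huD, mulVec_single_one]
  rfl

omit [NeZero (2 : K)] in
lemma swap_inl_inr_permMatrix_isometry (t : n) :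
    ((Equiv.swap (Sum.inl t : n ⊕ n) (.inr t)).permMatrix K)ᵀ * JD n K *
      (Equiv.swap (Sum.inl t : n ⊕ n) (.inr t)).permMatrix K = JD n K := by
  set σ := Equiv.swap (Sum.inl t : n ⊕ n) (.inr t) with hσ
  have hswap (k : n ⊕ n) : (σ k).swap = σ k.swap := by
    rw [hσ, Equiv.swap_comm, ← Sum.swap_leftInverse.injective.swap_apply, Equiv.swap_comm]
    rfl
  have hcomm : σ.permMatrix K * JD n K = JD n K * σ.permMatrix K :=
    ext_of_mulVec_single fun i => funext fun k => by
      simp only [← mulVec_mulVec, permMatrix_mulVec, JD_mulVec_apply, Function.comp_apply, hswap]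
  rw [transpose_permMatrix, hσ, Equiv.swap_inv, ← hσ, hcomm, Matrix.mul_assoc, ← permMatrix_mul,
    hσ, Equiv.swap_mul_self, permMatrix_one, Matrix.mul_one]

omit [NeZero (2 : K)] in
variable (K) in
lemma exists_isometryGroup_det_eq_neg_one_mulVec_single_eq [Nontrivial n] (o : n) :
    ∃ s ∈ isometryGroup (JD n K), (s : Matrix (n ⊕ n) (n ⊕ n) K).det = -1 ∧
      (s : Matrix (n ⊕ n) (n ⊕ n) K) *ᵥ Pi.single (.inl o) 1 = Pi.single (.inl o) 1 := by
  obtain ⟨t, hto⟩ := exists_ne o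
  have ho : Equiv.swap (Sum.inl t : n ⊕ n) (.inr t) (.inl o) = .inl o :=
    Equiv.swap_apply_of_ne_of_ne (Sum.inl_injective.ne hto.symm) Sum.inl_ne_inr
  obtain ⟨s, hs, hsP⟩ := exists_mem_isometryGroup_coe_eq JD_det_ne_zero
    (swap_inl_inr_permMatrix_isometry (K := K) t)
  refine ⟨s, hs, ?_, ?_⟩
  · rw [hsP, det_permutation, Equiv.Perm.sign_swap Sum.inl_ne_inr, Units.val_neg, Units.val_one,
      Int.cast_neg, Int.cast_one]
  · ext k
    simp only [hsP, permMatrix_mulVec, Function.comp_apply, Pi.single_apply,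
      Equiv.swap_apply_eq_iff, ho]

lemma exists_isometryGroup_mulVec_single_eq [IsAlgClosed K] (o : n) {v : n ⊕ n → K} (hv : v ≠ 0)
    (hiso : v ⬝ᵥ JD n K *ᵥ v = 0) :
    ∃ u ∈ isometryGroup (JD n K),
      (u : Matrix (n ⊕ n) (n ⊕ n) K) *ᵥ Pi.single (.inl o) 1 = v := by
  have hspan : K ∙ v ≤ (toBilin' (JD n K)).orthogonal (K ∙ v) := by
    simpa using isotropic_sup_span_singleton (isRefl_toBilin'_JD n K) (L := ⊥) bot_le (z := v)
      (by simp) (by rwa [toBilin'_apply'])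
  obtain ⟨M, hvM, hM, hdim⟩ :=
    exists_isotropic_ge_finrank_le (nondegenerate_toBilin'_JD n K) (isRefl_toBilin'_JD n K) hspan
  have hcard : Fintype.card n ≤ Module.finrank K M := by
    rw [Module.finrank_fintype_fun_eq_card, Fintype.card_sum] at hdim
    omega
  obtain ⟨a, ha, haM, hao⟩ := exists_linearIndependent_mem_apply_eq hcard hv
    (hvM (Submodule.mem_span_singleton_self v)) o
  obtain ⟨u, hu, hua⟩ := exists_isometryGroup_mulVec_single ha fun i j => by
    simpa [toBilin'_apply'] using hM (haM j) (a i) (haM i)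
  exact ⟨u, hu, (hua o).trans hao⟩

lemma exists_isometryGroup_det_eq_one_mulVec_single_eq [IsAlgClosed K] [Nontrivial n] (o : n)
    {v : n ⊕ n → K} (hv : v ≠ 0) (hiso : v ⬝ᵥ JD n K *ᵥ v = 0) :
    ∃ u ∈ isometryGroup (JD n K), (u : Matrix (n ⊕ n) (n ⊕ n) K).det = 1 ∧
      (u : Matrix (n ⊕ n) (n ⊕ n) K) *ᵥ Pi.single (.inl o) 1 = v := by
  obtain ⟨u, hu, huv⟩ := exists_isometryGroup_mulVec_single_eq o hv hiso
  rcases det_eq_one_or_neg_one_of_mem_isometryGroup JD_det_ne_zero hu with hdet | hdet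
  · exact ⟨u, hu, hdet, huv⟩
  · obtain ⟨s, hs, hsdet, hso⟩ := exists_isometryGroup_det_eq_neg_one_mulVec_single_eq K o
    refine ⟨u * s, mul_mem hu hs, ?_, ?_⟩
    · rw [Units.val_mul, det_mul, hdet, hsdet, neg_one_mul, neg_neg]
    · rw [Units.val_mul, ← mulVec_mulVec, hso, huv]

lemma exists_isometryGroup_conj_eq_fromBlocks [IsAlgClosed K] {X : Matrix (n ⊕ n) (n ⊕ n) K}
    (hX : X ∈ typeD n K) {t : K} (hXt : X * X = (t * t) • 1) :
    ∃ u ∈ isometryGroup (JD n K), ∃ b : Matrix n n K, bᵀ = -b ∧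
      X = (u : Matrix (n ⊕ n) (n ⊕ n) K) * fromBlocks (t • 1) b 0 (-(t • 1)) *
        (u⁻¹ : GL (n ⊕ n) K).val := by
  have hft : toLin' X * toLin' X = (t * t) • 1 := by
    rw [Module.End.mul_eq_comp, ← toLin'_mul, hXt, map_smul, toLin'_one]
    rfl
  obtain ⟨M, hM, hMX, hdim⟩ := exists_isotropic_le_eigenspace (nondegenerate_toBilin'_JD n K)
    (isRefl_toBilin'_JD n K) (isSkewAdjoint_toLin'_of_mem_typeD hX) hft
  have hcard : Fintype.card n ≤ Module.finrank K M := by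
    rw [Module.finrank_fintype_fun_eq_card, Fintype.card_sum] at hdim
    omega
  obtain ⟨f, hf⟩ := exists_linearIndependent_of_le_finrank hcard
  let a (i : n) : n ⊕ n → K := f (Fintype.equivFin n i)
  have ha : LinearIndependent K a :=
    (hf.comp _ (Fintype.equivFin n).injective).map' M.subtype M.ker_subtype
  have haM (i : n) : a i ∈ M := (f _).2
  obtain ⟨u, hu, hua⟩ := exists_isometryGroup_mulVec_single ha fun i j => by
    simpa [toBilin'_apply'] using hM (haM j) (a i) (haM i)
  let Z := ((u⁻¹ : GL (n ⊕ n) K) : Matrix (n ⊕ n) (n ⊕ n) K) * X * u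
  have hZ : Z ∈ typeD n K := by
    have hconj := conj_mem_skewAdjointMatricesLieSubalgebra (inv_mem hu) hX
    rwa [inv_inv] at hconj
  have hZt (i : n) : Z *ᵥ Pi.single (.inl i) 1 = t • Pi.single (.inl i) 1 := by
    have hXa : X *ᵥ a i = t • a i := Module.End.mem_eigenspace_iff.mp (hMX (haM i))
    simp only [Z, ← mulVec_mulVec, hua, hXa, mulVec_smul]
    rw [← hua, mulVec_mulVec, Units.inv_mul, one_mulVec]
  obtain ⟨b, hb, hZb⟩ := exists_eq_fromBlocks_of_mulVec_single_inl hZ hZt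
  refine ⟨u, hu, b, hb, ?_⟩
  rw [← hZb, Units.eq_mul_inv_iff_mul_eq, ← Matrix.mul_assoc, ← Matrix.mul_assoc, Units.mul_inv,
    Matrix.one_mul]

omit [DecidableEq n] in
lemma eq_zero_of_isSymm_of_dotProduct_mulVec_self {a : Matrix n n K} (haT : a.IsSymm)
    (ha : ∀ x, x ⬝ᵥ a *ᵥ x = 0) : a = 0 := by
  classical
  have hdiag (i : n) : a i i = 0 := by simpa using ha (Pi.single i 1)
  ext i j
  have hij := ha (Pi.single i 1 + Pi.single j 1)
  simp only [mulVec_add, mulVec_single_one, add_dotProduct, dotProduct_add, single_dotProduct,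
    one_mul, col_apply, hdiag, haT.apply i j] at hij
  exact (mul_eq_zero_iff_left (two_ne_zero (α := K))).mp (by linear_combination hij)

omit [NeZero (2 : K)] in
lemma exists_eq_smul_one_of_dotProduct_mulVec [Nonempty n] {b : Matrix n n K}
    (hb : ∀ x y, x ⬝ᵥ y = 0 → x ⬝ᵥ b *ᵥ y = 0) : ∃ c : K, b = c • 1 := by
  have hoff {i j : n} (hij : i ≠ j) : b i j = 0 := by
    simpa using hb (Pi.single i 1) (Pi.single j 1) (by simp [hij])
  have hdiag (i j : n) : b i i = b j j := by
    by_cases hij : i = j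
    · rw [hij]
    have := hb (Pi.single i 1 + Pi.single j 1) (Pi.single i 1 - Pi.single j 1)
      (by simp [hij, Ne.symm hij])
    simp only [mulVec_sub, mulVec_single_one, add_dotProduct, dotProduct_sub, single_dotProduct,
      one_mul, col_apply, hoff hij, hoff (Ne.symm hij)] at this
    linear_combination this
  obtain ⟨o⟩ := ‹Nonempty n›
  refine ⟨b o o, ext fun i j => ?_⟩
  by_cases hij : i = j
  · subst hij
    simp [hdiag i o]
  · simp [hij, hoff hij]

lemma exists_eq_smul_JD_of_isotropic [Nonempty n] {M : Matrix (n ⊕ n) (n ⊕ n) K}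
    (hMT : M.IsSymm) (hM : ∀ v, v ⬝ᵥ JD n K *ᵥ v = 0 → v ⬝ᵥ M *ᵥ v = 0) :
    ∃ c : K, M = c • JD n K := by
  obtain ⟨a, b, b', d, rfl⟩ : ∃ a b b' d, M = fromBlocks a b b' d :=
    ⟨_, _, _, _, (fromBlocks_toBlocks M).symm⟩
  obtain ⟨ha, rfl, -, hd⟩ := isSymm_fromBlocks_iff.mp hMT
  have hform (x y : n → K) (hxy : x ⬝ᵥ y = 0) :
      x ⬝ᵥ a *ᵥ x + 2 * (x ⬝ᵥ b *ᵥ y) + y ⬝ᵥ d *ᵥ y = 0 := by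
    have hJ : Sum.elim x y ⬝ᵥ JD n K *ᵥ Sum.elim x y = 0 := by
      simp [JD, fromBlocks_mulVec, dotProduct_comm y x, hxy]
    have hbT : y ⬝ᵥ bᵀ *ᵥ x = x ⬝ᵥ b *ᵥ y := by
      rw [mulVec_transpose, dotProduct_comm, ← dotProduct_mulVec]
    have hM' := hM _ hJ
    simp only [fromBlocks_mulVec, Sum.elim_comp_inl, Sum.elim_comp_inr, sumElim_dotProduct_sumElim,
      dotProduct_add, hbT] at hM'
    linear_combination hM'
  obtain rfl : a = 0 := eq_zero_of_isSymm_of_dotProduct_mulVec_self ha fun x => by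
    simpa using hform x 0
  obtain rfl : d = 0 := eq_zero_of_isSymm_of_dotProduct_mulVec_self hd fun y => by
    simpa using hform 0 y
  obtain ⟨c, rfl⟩ := exists_eq_smul_one_of_dotProduct_mulVec (b := b) fun x y hxy => by
    simpa [two_ne_zero] using hform x y hxy
  exact ⟨c, by simp [JD, fromBlocks_smul]⟩

/-- The quadratic form `w₁ = ∑_{i ≠ o} e_{ε_o - ε_i} e_{ε_o + ε_i}` on the matrices of type `D`,
the singular vector of the component `L(θ + θ₁)` of their second symmetric power. The index `o`
plays the role of `1`, and root vectors are matrix entries through the trace form. -/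
def singularVector (o : n) (X : Matrix (n ⊕ n) (n ⊕ n) K) : K :=
  ∑ i, if i = o then 0 else X (.inl i) (.inl o) * X (.inr i) (.inl o)

lemma apply_inr_inl_self_of_mem_typeD {X : Matrix (n ⊕ n) (n ⊕ n) K} (hX : X ∈ typeD n K) (i : n) :
    X (.inr i) (.inl i) = 0 := by
  rw [← fromBlocks_toBlocks X, fromBlocks_mem_typeD_iff] at hX
  have hii : X (.inr i) (.inl i) = -X (.inr i) (.inl i) := congrFun₂ hX.1 i i
  exact (mul_eq_zero_iff_left (two_ne_zero (α := K))).mp (by linear_combination hii)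

lemma two_mul_singularVector {X : Matrix (n ⊕ n) (n ⊕ n) K} (hX : X ∈ typeD n K) (o : n) :
    2 * singularVector o X =
      -(Pi.single (.inl o) 1 ⬝ᵥ (JD n K * (X * X)) *ᵥ Pi.single (.inl o) 1) := by
  have hsum : singularVector o X = ∑ i, X (.inl i) (.inl o) * X (.inr i) (.inl o) := by
    refine Finset.sum_congr rfl fun i _ => ?_
    split_ifs with hi
    · rw [hi, apply_inr_inl_self_of_mem_typeD hX, mul_zero]
    · rfl
  have hX' := mem_skewAdjointMatricesLieSubalgebra_iff_add_eq_zero.mp hX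
  calc 2 * singularVector o X = X.col (.inl o) ⬝ᵥ JD n K *ᵥ X.col (.inl o) := by
        simp only [hsum, dotProduct, Fintype.sum_sum_type, JD_mulVec_apply, col_apply,
          Sum.swap_inl, Sum.swap_inr, two_mul, mul_comm (X (.inr _) _)]
    _ = Pi.single (.inl o) 1 ⬝ᵥ (Xᵀ * JD n K * X) *ᵥ Pi.single (.inl o) 1 := by
        rw [← mulVec_single_one, ← mulVec_mulVec, ← mulVec_mulVec, dotProduct_mulVec _ Xᵀ,
          vecMul_transpose]
    _ = _ := by
        rw [eq_neg_of_add_eq_zero_left hX', neg_mul, Matrix.mul_assoc, neg_mulVec, dotProduct_neg]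

lemma two_mul_singularVector_conj {X : Matrix (n ⊕ n) (n ⊕ n) K} (hX : X ∈ typeD n K) (o : n)
    {g : GL (n ⊕ n) K} (hg : g ∈ isometryGroup (JD n K)) :
    2 * singularVector o ((g : Matrix (n ⊕ n) (n ⊕ n) K) * X * (g⁻¹ : GL (n ⊕ n) K).val) =
      -(((g⁻¹ : GL (n ⊕ n) K).val *ᵥ Pi.single (.inl o) 1) ⬝ᵥ
        (JD n K * (X * X)) *ᵥ ((g⁻¹ : GL (n ⊕ n) K).val *ᵥ Pi.single (.inl o) 1)) := by
  have hconj := conj_mem_skewAdjointMatricesLieSubalgebra hg hX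
  rw [two_mul_singularVector hconj, conj_mul_conj, ← mulVec_mulVec _ (JD n K), Matrix.mul_assoc,
    ← mulVec_mulVec _ g.val, ← mulVec_dotProduct_mulVec_mulVec (inv_mem hg)]
  simp only [mulVec_mulVec, Matrix.mul_assoc, Units.inv_mul_cancel_left]

theorem forall_singularVector_conj_eq_zero_iff [IsAlgClosed K] [Nontrivial n]
    {X : Matrix (n ⊕ n) (n ⊕ n) K} (hX : X ∈ typeD n K) (o : n) :
    (∀ g ∈ isometryGroup (JD n K), (g : Matrix (n ⊕ n) (n ⊕ n) K).det = 1 →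
      singularVector o ((g : Matrix (n ⊕ n) (n ⊕ n) K) * X * (g⁻¹ : GL (n ⊕ n) K).val) = 0) ↔
      ∃ c : K, X * X = c • 1 := by
  constructor
  · intro h
    have hX' := mem_skewAdjointMatricesLieSubalgebra_iff_add_eq_zero.mp hX
    have hsymm : (JD n K * (X * X)).IsSymm := by
      rw [IsSymm, transpose_mul, transpose_mul, JD_transpose, Matrix.mul_assoc,
        eq_neg_of_add_eq_zero_left hX', mul_neg, ← Matrix.mul_assoc,
        eq_neg_of_add_eq_zero_left hX', neg_mul, neg_neg, Matrix.mul_assoc]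
    obtain ⟨c, hc⟩ := exists_eq_smul_JD_of_isotropic hsymm fun v hv => by
      rcases eq_or_ne v 0 with rfl | hv0
      · exact zero_dotProduct _
      obtain ⟨u, hu, hdet, huv⟩ := exists_isometryGroup_det_eq_one_mulVec_single_eq o hv0 hv
      have hdet' : (u⁻¹ : GL (n ⊕ n) K).val.det = 1 := by simp [hdet]
      have hconj := two_mul_singularVector_conj hX o (inv_mem hu)
      rwa [h _ (inv_mem hu) hdet', mul_zero, inv_inv, huv, eq_comm, neg_eq_zero] at hconj
    refine ⟨c, ?_⟩
    rw [← Matrix.one_mul (X * X), ← JD_mul_self, Matrix.mul_assoc, hc, Matrix.mul_smul]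
  · rintro ⟨c, hc⟩ g hg -
    refine (mul_eq_zero_iff_left (two_ne_zero (α := K))).mp ?_
    rw [two_mul_singularVector_conj hX o hg, hc, Matrix.mul_smul, Matrix.mul_one, smul_mulVec,
      dotProduct_smul, mulVec_dotProduct_mulVec_mulVec (inv_mem hg), single_dotProduct,
      JD_mulVec_apply]
    simp

/-- The cone over the conjugacy class of the semisimple element `h₀ = diag(1, -1)` under the
isometry group of the split symmetric form. -/
def semisimpleCone (n K : Type*) [Fintype n] [DecidableEq n] [Field K] :
    Set (Matrix (n ⊕ n) (n ⊕ n) K) :=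
  {X | ∃ t : K, t ≠ 0 ∧ ∃ u ∈ isometryGroup (JD n K),
    X = t • ((u : Matrix (n ⊕ n) (n ⊕ n) K) * fromBlocks 1 0 0 (-1) * (u⁻¹ : GL (n ⊕ n) K).val)}

omit [NeZero (2 : K)] in
lemma fromBlocks_one_zero_one_isometry {e : Matrix n n K} (he : eᵀ = -e) :
    (fromBlocks 1 e 0 1)ᵀ * JD n K * fromBlocks 1 e 0 1 = JD n K := by
  simp [JD, fromBlocks_transpose, fromBlocks_multiply, he]

lemma conj_fromBlocks_mem_semisimpleCone {t : K} (ht : t ≠ 0) {b : Matrix n n K} (hb : bᵀ = -b)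
    {u : GL (n ⊕ n) K} (hu : u ∈ isometryGroup (JD n K)) :
    (u : Matrix (n ⊕ n) (n ⊕ n) K) * fromBlocks (t • 1) b 0 (-(t • 1)) * (u⁻¹ : GL (n ⊕ n) K).val ∈
      semisimpleCone n K := by
  let e : Matrix n n K := -(2 * t)⁻¹ • b
  have he : eᵀ = -e := by simp only [e, transpose_smul, hb, smul_neg]
  have hte : t • e + b = -(t • e) := by
    have h : t * -(2 * t)⁻¹ = -2⁻¹ := by field_simp
    have h' : (-2⁻¹ : K) + 1 = 2⁻¹ := by field_simp; norm_num
    rw [smul_smul, h, ← neg_smul, neg_neg]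
    nth_rw 2 [← one_smul K b]
    rw [← add_smul, h']
  obtain ⟨v, hv, hve⟩ :=
    exists_mem_isometryGroup_coe_eq JD_det_ne_zero (fromBlocks_one_zero_one_isometry he)
  have hconj : fromBlocks (t • 1) b 0 (-(t • 1)) =
      t • ((v : Matrix (n ⊕ n) (n ⊕ n) K) * fromBlocks 1 0 0 (-1) *
        (v⁻¹ : GL (n ⊕ n) K).val) := by
    rw [← smul_mul_assoc, Units.eq_mul_inv_iff_mul_eq, hve]
    simp [fromBlocks_multiply, fromBlocks_smul, hte]
  refine ⟨t, ht, u * v, mul_mem hu hv, ?_⟩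
  rw [hconj, _root_.mul_inv_rev, Units.val_mul, Units.val_mul, Matrix.mul_smul, Matrix.smul_mul]
  simp only [Matrix.mul_assoc]

theorem mem_semisimpleCone_iff [IsAlgClosed K] {X : Matrix (n ⊕ n) (n ⊕ n) K} :
    X ∈ semisimpleCone n K ↔ X ∈ typeD n K ∧ ∃ c : K, c ≠ 0 ∧ X * X = c • 1 := by
  constructor
  · rintro ⟨t, ht, u, hu, rfl⟩
    have hh : fromBlocks 1 0 0 (-1) ∈ typeD n K := fromBlocks_mem_typeD_iff.mpr (by simp)
    refine ⟨Submodule.smul_mem _ t (conj_mem_skewAdjointMatricesLieSubalgebra hu hh), t * t,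
      mul_ne_zero ht ht, ?_⟩
    rw [smul_mul_smul_comm, conj_mul_conj, fromBlocks_multiply]
    simp
  · rintro ⟨hX, c, hc, hXc⟩
    obtain ⟨t, rfl⟩ := IsAlgClosed.exists_eq_mul_self c
    obtain ⟨u, hu, b, hb, rfl⟩ := exists_isometryGroup_conj_eq_fromBlocks hX hXc
    exact conj_fromBlocks_mem_semisimpleCone (left_ne_zero_of_mul hc) hb hu

theorem semisimpleCone_union_eq [IsAlgClosed K] :
    semisimpleCone n K ∪ {X | X ∈ typeD n K ∧ X * X = 0} =
      {X | X ∈ typeD n K ∧ ∃ c : K, X * X = c • 1} := by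
  ext X
  simp only [Set.mem_union, mem_semisimpleCone_iff, Set.mem_ofPred_eq, ← and_or_left,
    and_congr_right_iff]
  intro _
  constructor
  · rintro (⟨c, -, hc⟩ | h)
    exacts [⟨c, hc⟩, ⟨0, by rw [h, zero_smul]⟩]
  · rintro ⟨c, hc⟩
    by_cases hc0 : c = 0
    · exact .inr (by rw [hc, hc0, zero_smul])
    · exact .inl ⟨c, hc0, hc⟩

lemma mem_zariskiClosure_semisimpleCone_of_mul_self_eq_zero [IsAlgClosed K]
    {X : Matrix (n ⊕ n) (n ⊕ n) K} (hX : X ∈ typeD n K) (hXX : X * X = 0) :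
    X ∈ zariskiClosure (semisimpleCone n K) := by
  have : Infinite K := IsAlgClosed.instInfinite
  obtain ⟨u, hu, b, hb, rfl⟩ :=
    exists_isometryGroup_conj_eq_fromBlocks hX (t := 0) (by rw [hXX, mul_zero, zero_smul])
  refine mem_zariskiClosure_of_forall_add_smul_mem
    (Y := (u : Matrix (n ⊕ n) (n ⊕ n) K) * fromBlocks 1 0 0 (-1) * (u⁻¹ : GL (n ⊕ n) K).val)
    fun s hs => ?_
  convert conj_fromBlocks_mem_semisimpleCone hs hb hu using 1
  rw [← Matrix.smul_mul, ← Matrix.mul_smul, ← Matrix.add_mul, ← Matrix.mul_add, fromBlocks_smul,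
    fromBlocks_add]
  simp

theorem zariskiClosure_semisimpleCone [IsAlgClosed K] :
    zariskiClosure (semisimpleCone n K) = {X | X ∈ typeD n K ∧ ∃ c : K, X * X = c • 1} := by
  refine Set.Subset.antisymm (fun X hX => ⟨?_, ?_⟩) ?_
  · exact zariskiClosure_subset_skewAdjointMatricesLieSubalgebra
      (fun _ hY => (mem_semisimpleCone_iff.mp hY).1) hX
  · refine exists_mul_self_eq_smul_one_of_mem_zariskiClosure (fun Y hY => ?_) hX
    obtain ⟨-, c, -, hc⟩ := mem_semisimpleCone_iff.mp hY
    exact ⟨c, hc⟩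
  · rw [← semisimpleCone_union_eq]
    exact Set.union_subset (subset_zariskiClosure _) fun X hX =>
      mem_zariskiClosure_semisimpleCone_of_mul_self_eq_zero hX.1 hX.2

theorem stmt_18_general [IsAlgClosed K] [Nontrivial n] (o : n) :
    {X ∈ typeD n K | ∀ g ∈ isometryGroup (JD n K), (g : Matrix (n ⊕ n) (n ⊕ n) K).det = 1 →
        singularVector o ((g : Matrix (n ⊕ n) (n ⊕ n) K) * X * (g⁻¹ : GL (n ⊕ n) K).val) = 0} =
      semisimpleCone n K ∪ {X ∈ typeD n K | X * X = 0} ∧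
    semisimpleCone n K ∪ {X ∈ typeD n K | X * X = 0} =
      {X ∈ typeD n K | ∃ c : K, X * X = c • 1} ∧
    {X ∈ typeD n K | ∀ g ∈ isometryGroup (JD n K), (g : Matrix (n ⊕ n) (n ⊕ n) K).det = 1 →
        singularVector o ((g : Matrix (n ⊕ n) (n ⊕ n) K) * X * (g⁻¹ : GL (n ⊕ n) K).val) = 0} =
      zariskiClosure (semisimpleCone n K) := by
  have hq : {X ∈ typeD n K | ∀ g ∈ isometryGroup (JD n K),
      (g : Matrix (n ⊕ n) (n ⊕ n) K).det = 1 → singularVector o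
        ((g : Matrix (n ⊕ n) (n ⊕ n) K) * X * (g⁻¹ : GL (n ⊕ n) K).val) = 0} =
      {X ∈ typeD n K | ∃ c : K, X * X = c • 1} :=
    Set.ext fun X => and_congr_right fun hX => forall_singularVector_conj_eq_zero_iff hX o
  exact ⟨hq.trans semisimpleCone_union_eq.symm, semisimpleCone_union_eq,
    hq.trans zariskiClosure_semisimpleCone.symm⟩

end SplitForm

theorem stmt_18 (r : ℕ) (hr : 5 ≤ r)
    (J : MatB r) (hJ : J = Matrix.fromBlocks 0 1 1 0)
    -- `so_{2r}(ℂ)`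
    (so : Set (MatB r)) (hso : so = {X | Xᵀ * J + J * X = 0})
    -- `SO_J(ℂ)` and `O_J(ℂ)`
    (SOJ OJ : Set (GLB r))
    (hSOJ : SOJ = {g : GLB r | (↑g : MatB r)ᵀ * J * (↑g : MatB r) = J ∧
      (↑g : MatB r).det = 1})
    (hOJ : OJ = {g : GLB r | (↑g : MatB r)ᵀ * J * (↑g : MatB r) = J})
    -- `h₀`
    (h₀ : MatB r) (hh₀ : h₀ = Matrix.fromBlocks 1 0 0 (-1))
    -- `q(X) = Σ_{i=2}^r X_{i,1}·X_{r+i,1}`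
    (q : MatB r → ℂ)
    (hq : q = fun X => ∑ i : Fin r, if (i : ℕ) = 0 then 0 else
      X (Sum.inl i) (Sum.inl ⟨0, by omega⟩) * X (Sum.inr i) (Sum.inl ⟨0, by omega⟩))
    -- the cone `{t·u·h₀·u⁻¹ : t ∈ ℂ∖{0}, u ∈ O_J(ℂ)}`
    (C : Set (MatB r))
    (hC : C = {X | ∃ t : ℂ, t ≠ 0 ∧ ∃ u ∈ OJ,
      X = t • ((↑u : MatB r) * h₀ * (↑u⁻¹ : MatB r))}) :
    {X ∈ so | ∀ g ∈ SOJ, q ((↑g : MatB r) * X * (↑g⁻¹ : MatB r)) = 0} =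
      C ∪ {X ∈ so | X * X = 0} ∧
    C ∪ {X ∈ so | X * X = 0} = {X ∈ so | ∃ c : ℂ, X * X = c • (1 : MatB r)} ∧
    {X ∈ so | ∀ g ∈ SOJ, q ((↑g : MatB r) * X * (↑g⁻¹ : MatB r)) = 0} = zclosure C := by
  subst hJ hso hSOJ hOJ hh₀ hq hC
  have : Nontrivial (Fin r) := Fin.nontrivial_iff_two_le.mpr (by omega)
  have h := stmt_18_general (K := ℂ) (⟨0, by omega⟩ : Fin r)
  rw [zclosure_eq_zariskiClosure]
  simpa only [LieAlgebra.Orthogonal.typeD, mem_skewAdjointMatricesLieSubalgebra_iff_add_eq_zero,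
    mem_isometryGroup_iff, singularVector, semisimpleCone, LieAlgebra.Orthogonal.JD, Fin.ext_iff,
    Set.mem_ofPred_eq, and_imp] using h
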